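/- Let Φ be a continuous flow on a compact metric space X, μ an ergodic Φ-invariant Borel probability measure, and P, Q finite Borel partitions of X. For every δ > 0 there exist a Borel set H of μ-generic points with μ(H) > 1-δ and t_0 > 1 such that for all x, y ∈ H and t ≥ t_0: f_t(x,y,P) ≤ 4 f_t(x,y,Q) + 2 d_μ(P,Q) + δ. -/

import Mathlib

open MeasureTheory Filter Set Topology
open scoped ENNReal symmDiff

section FK

structure IsFlow {X : Type*} [TopologicalSpace X] (Φ : ℝ → X → X) : Prop where
  cont : Continuous fun p : ℝ × X => Φ p.1 p.2
  map_zero : ∀ x, Φ 0 x = x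
  map_add : ∀ t s x, Φ (t + s) x = Φ s (Φ t x)

variable {X : Type*} [MetricSpace X]

/-- `x` and `y` are `(t,ε,δ)`-matchable: there are measurable `A, A' ⊆ [0,t]` of Lebesgue
measure `> (1-ε)t` and an increasing absolutely continuous onto map `h : A → A'`
(with a.e. derivative `h'`) with `|h' - 1| < ε` and `d(φ^s x, φ^{h s} y) < δ` on `A`. -/
def Matchable (Φ : ℝ → X → X) (x y : X) (t ε δ : ℝ) : Prop :=
  ∃ (A A' : Set ℝ) (h h' : ℝ → ℝ),
    MeasurableSet A ∧ MeasurableSet A' ∧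
    A ⊆ Icc 0 t ∧ A' ⊆ Icc 0 t ∧
    ENNReal.ofReal ((1 - ε) * t) < volume A ∧
    ENNReal.ofReal ((1 - ε) * t) < volume A' ∧
    MapsTo h A A' ∧ SurjOn h A A' ∧ StrictMonoOn h A ∧
    (∀ B ⊆ A, MeasurableSet B → volume (h '' B) = ENNReal.ofReal (∫ s in B, h' s)) ∧
    (∀ s ∈ A, |h' s - 1| < ε) ∧
    (∀ s ∈ A, dist (Φ s x) (Φ (h s) y) < δ)

/-- The `(t,δ)`-gap `f̃_{t,δ}(x,y)`; by convention it equals `1` when no matching exists. -/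
noncomputable def fkGap (Φ : ℝ → X → X) (t δ : ℝ) (x y : X) : ℝ :=
  sInf ({ε : ℝ | 0 < ε ∧ Matchable Φ x y t ε δ} ∪ {1})

/-- `f̃_δ(x,y) = limsup_{t → ∞} f̃_{t,δ}(x,y)`. -/
noncomputable def fkDist (Φ : ℝ → X → X) (δ : ℝ) (x y : X) : ℝ :=
  Filter.limsup (fun t => fkGap Φ t δ x y) Filter.atTop

/-- The Feldman–Katok pseudometric for flows. -/
noncomputable def rhoFK (Φ : ℝ → X → X) (x y : X) : ℝ :=
  sInf {δ : ℝ | 0 < δ ∧ fkDist Φ δ x y < δ}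

/-- Discrete `(n,δ)`-matching of cardinality `k` for a map `T`. -/
def DMatching (T : X → X) (x y : X) (n : ℕ) (δ : ℝ) (k : ℕ) : Prop :=
  ∃ (D D' : Finset ℕ) (π : ℕ → ℕ),
    D ⊆ Finset.range n ∧ D' ⊆ Finset.range n ∧ D.card = k ∧
    Set.BijOn π ↑D ↑D' ∧ StrictMonoOn π ↑D ∧
    ∀ i ∈ D, dist (T^[i] x) (T^[π i] y) < δ

/-- The discrete `(n,δ)`-gap `f̄_{n,δ}(x,y)`. -/
noncomputable def dGap (T : X → X) (n : ℕ) (δ : ℝ) (x y : X) : ℝ :=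
  1 - ((sSup {k : ℕ | DMatching T x y n δ k} : ℕ) : ℝ) / n

/-- `f̄_δ(x,y) = limsup_{n → ∞} f̄_{n,δ}(x,y)`. -/
noncomputable def dFKdist (T : X → X) (δ : ℝ) (x y : X) : ℝ :=
  Filter.limsup (fun n : ℕ => dGap T n δ x y) Filter.atTop

/-- The discrete Feldman–Katok pseudometric. -/
noncomputable def dRhoFK (T : X → X) (x y : X) : ℝ :=
  sInf {δ : ℝ | 0 < δ ∧ dFKdist T δ x y ≤ δ}

variable [MeasurableSpace X] [BorelSpace X]

/-- The `t`-empirical measure `μ_{x,t} = (1/t) ∫_0^t δ_{φ^s x} ds`. -/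
noncomputable def empMeasure (Φ : ℝ → X → X) (x : X) (t : ℝ) : Measure X :=
  (ENNReal.ofReal (1 / t)) • Measure.map (fun s => Φ s x) (volume.restrict (Icc 0 t))

/-- `x` is generic for `μ`: empirical measures converge to `μ` in the weak* topology. -/
def Generic (Φ : ℝ → X → X) (μ : Measure X) (x : X) : Prop :=
  ∀ f : C(X, ℝ), Tendsto (fun t => ∫ z, f z ∂(empMeasure Φ x t)) atTop (𝓝 (∫ z, f z ∂μ))

def FlowInvariant (Φ : ℝ → X → X) (μ : Measure X) : Prop :=
  ∀ t : ℝ, MeasurePreserving (Φ t) μ μ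

def FlowErgodic (Φ : ℝ → X → X) (μ : Measure X) : Prop :=
  FlowInvariant Φ μ ∧
    ∀ A : Set X, MeasurableSet A → (∀ t, Φ t ⁻¹' A = A) → μ A = 0 ∨ μ A = 1

/-- The Prokhorov metric. -/
noncomputable def prokhorov (μ ν : Measure X) : ℝ :=
  sInf {ε : ℝ | 0 < ε ∧ ∀ B : Set X, MeasurableSet B →
    μ B ≤ ν (Metric.thickening ε B) + ENNReal.ofReal ε}

/-- A finite Borel partition of `X`, indexed by `ℕ` with all but finitely many cells empty. -/
structure BPartition (X : Type*) [MeasurableSpace X] where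
  cells : ℕ → Set X
  measurable : ∀ j, MeasurableSet (cells j)
  disj : Pairwise (Function.onFun Disjoint cells)
  cover : ⋃ j, cells j = Set.univ
  finite : ∃ n, ∀ j, n ≤ j → cells j = ∅

/-- The partition pseudometric `d_μ(P,Q)` (infimum over orderings of
`μ {x : P(x) ≠ Q(x)}`). -/
noncomputable def dPart (μ : Measure X) (P Q : ℕ → Set X) : ℝ :=
  ⨅ σ : Equiv.Perm ℕ, (μ (⋃ j, P j \ Q (σ j))).toReal

/-- `(t,ε,P)`-matchability with respect to a partition `P` (Ratner). -/
def PMatchable (Φ : ℝ → X → X) (P : ℕ → Set X) (x y : X) (t ε : ℝ) : Prop :=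
  ∃ (A A' : Set ℝ) (h h' : ℝ → ℝ),
    MeasurableSet A ∧ MeasurableSet A' ∧
    A ⊆ Icc 0 t ∧ A' ⊆ Icc 0 t ∧
    ENNReal.ofReal ((1 - ε) * t) < volume A ∧
    ENNReal.ofReal ((1 - ε) * t) < volume A' ∧
    MapsTo h A A' ∧ SurjOn h A A' ∧ StrictMonoOn h A ∧
    (∀ B ⊆ A, MeasurableSet B → volume (h '' B) = ENNReal.ofReal (∫ s in B, h' s)) ∧
    (∀ s ∈ A, |h' s - 1| < ε) ∧
    (∀ s ∈ A, ∀ j, Φ s x ∈ P j ↔ Φ (h s) y ∈ P j)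

/-- `f_t(x,y,P)`. -/
noncomputable def fPart (Φ : ℝ → X → X) (P : ℕ → Set X) (t : ℝ) (x y : X) : ℝ :=
  sInf ({ε : ℝ | 0 < ε ∧ PMatchable Φ P x y t ε} ∪ {1})

/-- The `(t,P)`-ball of radius `ε` centered at `x`. -/
def PBall (Φ : ℝ → X → X) (P : ℕ → Set X) (t ε : ℝ) (x : X) : Set X :=
  {y | fPart Φ P t x y < ε}

/-- `K_t(ε,P)`: minimal cardinality of an `(ε,t,P)`-cover (`⊤` if none exists). -/
noncomputable def Kt (μ : Measure X) (Φ : ℝ → X → X) (P : ℕ → Set X) (ε t : ℝ) : ℝ≥0∞ :=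
  sInf ((fun C : Finset X => (C.card : ℝ≥0∞)) ''
    {C : Finset X | ENNReal.ofReal (1 - ε) < μ (⋃ x ∈ C, PBall Φ P t ε x)})

/-- `β(u,ε,P) = liminf_{t→∞} log K_t(ε,P) / u(t)`. -/
noncomputable def betaU (μ : Measure X) (Φ : ℝ → X → X) (P : ℕ → Set X) (u : ℝ → ℝ)
    (ε : ℝ) : EReal :=
  Filter.liminf (fun t => ENNReal.log (Kt μ Φ P ε t) / (ENNReal.ofReal (u t) : EReal))
    Filter.atTop

/-- `e(u,P) = limsup_{ε→0⁺} β(u,ε,P)`. -/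
noncomputable def eUP (μ : Measure X) (Φ : ℝ → X → X) (P : ℕ → Set X) (u : ℝ → ℝ) : EReal :=
  Filter.limsup (fun ε => betaU μ Φ P u ε) (𝓝[>] (0 : ℝ))

/-- `e(Φ,u) = sup_P e(u,P)`. -/
noncomputable def ePhi (μ : Measure X) (Φ : ℝ → X → X) (u : ℝ → ℝ) : EReal :=
  ⨆ P : BPartition X, eUP μ Φ P.cells u

end FK

/-!
By Garsia's maximal inequality, the averages of a bounded measurable function along almost every
orbit converge to its integral. Applied to a countable dense set of continuous functions this makes
almost every point generic; applied to the indicator of `{P ≠ Q}`, together with Egorov's theorem,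
it bounds the time that orbits spend in `{P ≠ Q}` up to time `t` by `κ t`, uniformly on a set of
nearly full measure, for any given `κ > μ {P ≠ Q}`.

Removing from a `(t, ε, Q)`-matching `h` the times at which either orbit visits `{P ≠ Q}` leaves a
matching for `P`. Since `h` distorts measure by a factor between `1 - ε` and `1 + ε`, and the
removed pieces have measure at most `t / 2` (otherwise the claimed bound exceeds the trivial bound
`f_t ≤ 1`), what is lost in the domain and in the image is at most `(2 κ + ε / 2) t`.
-/

section MaximalErgodic

/-- The running maximum of the Birkhoff sums `S₀ = 0, S₁, …, S_n` of `G` under `T`, given by the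
recursion `M_{n+1} = max 0 (G + M_n ∘ T)` that drives Garsia's proof of the maximal ergodic
theorem. -/
noncomputable def birkhoffMax {X : Type*} (T : X → X) (G : X → ℝ) : ℕ → X → ℝ
  | 0, _ => 0
  | n + 1, x => max 0 (G x + birkhoffMax T G n (T x))

variable {X : Type*} {T : X → X} {G : X → ℝ}

lemma birkhoffMax_nonneg (n : ℕ) (x : X) : 0 ≤ birkhoffMax T G n x := by
  cases n with
  | zero => exact le_rfl
  | succ n => exact le_max_left _ _

lemma monotone_birkhoffMax : Monotone (birkhoffMax T G) := by
  refine monotone_nat_of_le_succ fun n x => ?_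
  induction n generalizing x with
  | zero => exact birkhoffMax_nonneg 1 x
  | succ n ih => exact max_le_max le_rfl (by simpa using ih (T x))

lemma birkhoffSum_le_birkhoffMax (n : ℕ) (x : X) :
    birkhoffSum T G n x ≤ birkhoffMax T G n x := by
  induction n generalizing x with
  | zero => exact le_rfl
  | succ n ih =>
    rw [birkhoffSum_succ']
    exact le_max_of_le_right (by simpa using ih (T x))

lemma birkhoffMax_sub_comp_le_indicator (n : ℕ) (x : X) :
    birkhoffMax T G n x - birkhoffMax T G n (T x) ≤
      {z | 0 < birkhoffMax T G n z}.indicator G x := by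
  by_cases hx : 0 < birkhoffMax T G n x
  · rw [indicator_of_mem (s := {z | 0 < birkhoffMax T G n z}) hx]
    cases n with
    | zero => exact absurd hx (lt_irrefl 0)
    | succ n =>
      have hrec : birkhoffMax T G (n + 1) x = G x + birkhoffMax T G n (T x) :=
        max_eq_right (not_lt.1 fun hneg => hx.ne' (max_eq_left hneg.le))
      linarith [monotone_birkhoffMax (T := T) (G := G) n.le_succ (T x)]
  · rw [indicator_of_notMem (s := {z | 0 < birkhoffMax T G n z}) hx]
    linarith [birkhoffMax_nonneg (T := T) (G := G) n (T x)]

variable [MeasurableSpace X] {μ : Measure X}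

lemma integrable_birkhoffMax (hT : MeasurePreserving T μ μ) (hG : Integrable G μ) (n : ℕ) :
    Integrable (birkhoffMax T G n) μ := by
  induction n with
  | zero => exact integrable_zero _ _ _
  | succ n ih =>
    exact (integrable_zero X ℝ μ).sup (hG.add (hT.integrable_comp_of_integrable ih))

lemma nullMeasurableSet_birkhoffMax_pos (hT : MeasurePreserving T μ μ) (hG : Integrable G μ)
    (n : ℕ) : NullMeasurableSet {x | 0 < birkhoffMax T G n x} μ :=
  nullMeasurableSet_lt aemeasurable_const (integrable_birkhoffMax hT hG n).aemeasurable

theorem setIntegral_birkhoffMax_pos_nonneg (hT : MeasurePreserving T μ μ) (hG : Integrable G μ)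
    (n : ℕ) : 0 ≤ ∫ x in {z | 0 < birkhoffMax T G n z}, G x ∂μ := by
  have hM := integrable_birkhoffMax hT hG n
  have hMT : Integrable (fun x => birkhoffMax T G n (T x)) μ := hT.integrable_comp_of_integrable hM
  have hpos := nullMeasurableSet_birkhoffMax_pos hT hG n
  have hinv : ∫ x, birkhoffMax T G n (T x) ∂μ = ∫ x, birkhoffMax T G n x ∂μ := by
    rw [← integral_map hT.aemeasurable (hT.map_eq.symm ▸ hM.aestronglyMeasurable), hT.map_eq]
  calc
    0 = ∫ x, (birkhoffMax T G n x - birkhoffMax T G n (T x)) ∂μ := by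
      rw [integral_sub hM hMT, hinv, sub_self]
    _ ≤ ∫ x, {z | 0 < birkhoffMax T G n z}.indicator G x ∂μ :=
      integral_mono (hM.sub hMT) (hG.indicator₀ hpos) (birkhoffMax_sub_comp_le_indicator n)
    _ = ∫ x in {z | 0 < birkhoffMax T G n z}, G x ∂μ := integral_indicator₀ hpos

theorem integral_nonneg_of_ae_exists_birkhoffSum_pos (hT : MeasurePreserving T μ μ)
    (hG : Integrable G μ) (h : ∀ᵐ x ∂μ, ∃ n, 0 < birkhoffSum T G n x) : 0 ≤ ∫ x, G x ∂μ := by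
  have hmono : Monotone fun n => {x | 0 < birkhoffMax T G n x} := fun m n hmn x hx =>
    lt_of_lt_of_le hx (monotone_birkhoffMax hmn x)
  have hfull : ⋃ n, {x | 0 < birkhoffMax T G n x} =ᵐ[μ] univ := by
    refine eventuallyEq_univ.2 ?_
    filter_upwards [h] with x ⟨n, hn⟩
    exact mem_iUnion.2 ⟨n, hn.trans_le (birkhoffSum_le_birkhoffMax n x)⟩
  rw [← setIntegral_univ, ← setIntegral_congr_set hfull]
  exact ge_of_tendsto' (tendsto_setIntegral_of_monotone₀
    (nullMeasurableSet_birkhoffMax_pos hT hG) hmono hG.integrableOn)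
    (setIntegral_birkhoffMax_pos_nonneg hT hG)

theorem le_integral_of_ae_frequently_lt_birkhoffAverage [IsProbabilityMeasure μ] {c : ℝ}
    (hT : MeasurePreserving T μ μ) (hG : Integrable G μ)
    (h : ∀ᵐ x ∂μ, ∃ᶠ n in atTop, c < birkhoffAverage ℝ T G n x) : c ≤ ∫ x, G x ∂μ := by
  suffices 0 ≤ ∫ x, (G x - c) ∂μ by
    rwa [integral_sub hG (integrable_const c), integral_const, probReal_univ, one_smul,
      sub_nonneg] at this
  refine integral_nonneg_of_ae_exists_birkhoffSum_pos hT (hG.sub (integrable_const c)) ?_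
  filter_upwards [h] with x hx
  obtain ⟨n, hn, hn0⟩ := (hx.and_eventually (eventually_gt_atTop 0)).exists
  refine ⟨n, ?_⟩
  have hsum : birkhoffSum T (fun z => G z - c) n x = birkhoffSum T G n x - n * c := by
    simp [birkhoffSum, Finset.sum_sub_distrib]
  rw [birkhoffAverage, smul_eq_mul, ← div_eq_inv_mul, lt_div_iff₀ (Nat.cast_pos.2 hn0)] at hn
  rw [hsum]
  linarith

end MaximalErgodic

section FlowAverage

variable {X : Type*} {Φ : ℝ → X → X} {f : X → ℝ} {C : ℝ}

/-- The average of `f` along the `Φ`-orbit of `x` over the times in `[0, T]`. -/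
noncomputable def timeAverage (Φ : ℝ → X → X) (f : X → ℝ) (T : ℝ) (x : X) : ℝ :=
  ⨍ s in (0 : ℝ)..T, f (Φ s x)

lemma timeAverage_eq_div (T : ℝ) (x : X) :
    timeAverage Φ f T x = (∫ s in (0 : ℝ)..T, f (Φ s x)) / T := by
  rw [timeAverage, interval_average_eq_div, sub_zero]

lemma mul_timeAverage (T : ℝ) (x : X) :
    T * timeAverage Φ f T x = ∫ s in (0 : ℝ)..T, f (Φ s x) := by
  rcases eq_or_ne T 0 with rfl | hT
  · simp
  · rw [timeAverage_eq_div, mul_div_cancel₀ _ hT]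

lemma timeAverage_neg (T : ℝ) (x : X) :
    timeAverage Φ (-f) T x = -timeAverage Φ f T x := by
  simp_rw [Pi.neg_def]
  rw [timeAverage_eq_div, timeAverage_eq_div, intervalIntegral.integral_neg, neg_div]

lemma abs_integral_orbit_le (hC : ∀ z, |f z| ≤ C) (x : X) (a b : ℝ) :
    |∫ s in a..b, f (Φ s x)| ≤ C * |b - a| := by
  rw [← Real.norm_eq_abs]
  exact intervalIntegral.norm_integral_le_of_norm_le_const fun s _ => hC (Φ s x)

lemma abs_timeAverage_le (hC : ∀ z, |f z| ≤ C) (T : ℝ) (x : X) : |timeAverage Φ f T x| ≤ C := by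
  rw [timeAverage_eq_div, abs_div]
  refine div_le_of_le_mul₀ (abs_nonneg T) ((abs_nonneg _).trans (hC x)) ?_
  simpa using abs_integral_orbit_le (Φ := Φ) hC x 0 T

variable [TopologicalSpace X]

lemma IsFlow.continuous_orbit (hΦ : IsFlow Φ) (x : X) : Continuous fun s => Φ s x :=
  hΦ.cont.comp (continuous_id.prodMk continuous_const)

lemma IsFlow.iterate_time_one (hΦ : IsFlow Φ) (n : ℕ) (x : X) : (Φ 1)^[n] x = Φ n x := by
  induction n with
  | zero => simp [hΦ.map_zero]
  | succ n ih => rw [Function.iterate_succ_apply', ih, ← hΦ.map_add, Nat.cast_succ]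

lemma IsFlow.integral_orbit_shift (hΦ : IsFlow Φ) (f : X → ℝ) (a T : ℝ) (x : X) :
    ∫ s in (0 : ℝ)..T, f (Φ s (Φ a x)) = ∫ s in a..(a + T), f (Φ s x) := by
  simp_rw [← hΦ.map_add]
  rw [intervalIntegral.integral_comp_add_left (fun s => f (Φ s x)) a, add_zero]

variable [MeasurableSpace X] [BorelSpace X]

lemma IsFlow.intervalIntegrable_orbit (hΦ : IsFlow Φ) (hf : Measurable f)
    (hC : ∀ z, |f z| ≤ C) (x : X) (a b : ℝ) :
    IntervalIntegrable (fun s => f (Φ s x)) volume a b :=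
  (intervalIntegrable_const (c := C)).mono_fun
    (hf.comp (hΦ.continuous_orbit x).measurable).aestronglyMeasurable
    (ae_of_all _ fun s => (hC (Φ s x)).trans (le_abs_self C))

lemma IsFlow.abs_integral_orbit_comp_sub_le (hΦ : IsFlow Φ) (hf : Measurable f)
    (hC : ∀ z, |f z| ≤ C) (a T : ℝ) (x : X) :
    |(∫ s in (0 : ℝ)..T, f (Φ s (Φ a x))) - ∫ s in (0 : ℝ)..T, f (Φ s x)| ≤ 2 * C * |a| := by
  have hi := hΦ.intervalIntegrable_orbit hf hC x
  have htail : |∫ s in T..(a + T), f (Φ s x)| ≤ C * |a| := by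
    simpa using abs_integral_orbit_le (Φ := Φ) hC x T (a + T)
  have hhead : |∫ s in (0 : ℝ)..a, f (Φ s x)| ≤ C * |a| := by
    simpa using abs_integral_orbit_le (Φ := Φ) hC x 0 a
  rw [hΦ.integral_orbit_shift,
    intervalIntegral.integral_interval_sub_interval_comm' (hi _ _) (hi _ _) (hi _ _)]
  linarith [abs_sub (∫ s in T..(a + T), f (Φ s x)) (∫ s in (0 : ℝ)..a, f (Φ s x)),
    add_comm T a]

lemma IsFlow.tendsto_timeAverage_comp_sub (hΦ : IsFlow Φ) (hf : Measurable f)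
    (hC : ∀ z, |f z| ≤ C) (a : ℝ) (x : X) :
    Tendsto (fun T => timeAverage Φ f T (Φ a x) - timeAverage Φ f T x) atTop (𝓝 0) := by
  refine squeeze_zero_norm' ?_ (tendsto_const_nhds.div_atTop tendsto_id (a := 2 * C * |a|))
  filter_upwards [eventually_gt_atTop 0] with T hT
  rw [timeAverage_eq_div, timeAverage_eq_div, ← sub_div, Real.norm_eq_abs, abs_div, abs_of_pos hT]
  exact div_le_div_of_nonneg_right (hΦ.abs_integral_orbit_comp_sub_le hf hC a T x) hT.le

lemma IsFlow.abs_timeAverage_sub_timeAverage_le (hΦ : IsFlow Φ) (hf : Measurable f)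
    (hC : ∀ z, |f z| ≤ C) (S : ℝ) {T : ℝ} (hT : 0 < T) (x : X) :
    |timeAverage Φ f T x - timeAverage Φ f S x| ≤ 2 * C * |T - S| / T := by
  have hi := hΦ.intervalIntegrable_orbit hf hC x
  have hsplit : T * (timeAverage Φ f T x - timeAverage Φ f S x) =
      (∫ s in S..T, f (Φ s x)) - (T - S) * timeAverage Φ f S x := by
    rw [← intervalIntegral.integral_interval_sub_left (hi 0 T) (hi 0 S), ← mul_timeAverage T,
      ← mul_timeAverage S]
    ring
  have hint := abs_integral_orbit_le (Φ := Φ) hC x S T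
  have havg := mul_le_mul_of_nonneg_left (abs_timeAverage_le (Φ := Φ) hC S x) (abs_nonneg (T - S))
  rw [← abs_mul] at havg
  rw [le_div_iff₀' hT]
  calc
    T * |timeAverage Φ f T x - timeAverage Φ f S x|
      = |(∫ s in S..T, f (Φ s x)) - (T - S) * timeAverage Φ f S x| := by
      rw [← hsplit, abs_mul, abs_of_pos hT]
    _ ≤ |∫ s in S..T, f (Φ s x)| + |(T - S) * timeAverage Φ f S x| := abs_sub _ _
    _ ≤ 2 * C * |T - S| := by linarith

lemma IsFlow.tendstoUniformlyOn_timeAverage_of_natCast (hΦ : IsFlow Φ) (hf : Measurable f)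
    (hC : ∀ z, |f z| ≤ C) {g : X → ℝ} {S : Set X}
    (h : TendstoUniformlyOn (fun n : ℕ => timeAverage Φ f n) g atTop S) :
    TendstoUniformlyOn (timeAverage Φ f) g atTop S := by
  rw [Metric.tendstoUniformlyOn_iff] at h ⊢
  intro ε hε
  have hrate : Tendsto (fun t : ℝ => 2 * C / t) atTop (𝓝 0) :=
    tendsto_const_nhds.div_atTop tendsto_id
  filter_upwards [tendsto_nat_floor_atTop.eventually (h (ε / 2) (half_pos hε)),
    hrate.eventually_lt_const (half_pos hε), eventually_gt_atTop 0] with t hfloor hsmall ht x hx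
  have hC0 : 0 ≤ C := (abs_nonneg _).trans (hC x)
  have hfrac : |t - ⌊t⌋₊| ≤ 1 := by
    rw [abs_of_nonneg (sub_nonneg.2 (Nat.floor_le ht.le))]
    linarith [Nat.lt_floor_add_one t]
  have hclose : dist (timeAverage Φ f ⌊t⌋₊ x) (timeAverage Φ f t x) ≤ 2 * C / t := by
    rw [dist_comm]
    refine (hΦ.abs_timeAverage_sub_timeAverage_le hf hC ⌊t⌋₊ ht x).trans ?_
    exact div_le_div_of_nonneg_right (mul_le_of_le_one_right (by positivity) hfrac) ht.le
  linarith [dist_triangle (g x) (timeAverage Φ f ⌊t⌋₊ x) (timeAverage Φ f t x), hfloor x hx]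

lemma IsFlow.timeAverage_natCast (hΦ : IsFlow Φ) (hf : Measurable f) (hC : ∀ z, |f z| ≤ C)
    (n : ℕ) (x : X) :
    timeAverage Φ f n x = birkhoffAverage ℝ (Φ 1) (timeAverage Φ f 1) n x := by
  have hsum := intervalIntegral.sum_integral_adjacent_intervals (a := Nat.cast) (n := n)
    fun k _ => hΦ.intervalIntegrable_orbit hf hC x k (k + 1 : ℕ)
  rw [Nat.cast_zero] at hsum
  rw [timeAverage_eq_div, ← hsum, birkhoffAverage, birkhoffSum, smul_eq_mul, div_eq_inv_mul]
  congr 1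
  refine Finset.sum_congr rfl fun k _ => ?_
  rw [hΦ.iterate_time_one, timeAverage_eq_div, div_one, hΦ.integral_orbit_shift, Nat.cast_succ]

variable [SecondCountableTopology X]

lemma IsFlow.stronglyMeasurable_uncurry_comp (hΦ : IsFlow Φ) (hf : Measurable f) :
    StronglyMeasurable fun p : X × ℝ => f (Φ p.2 p.1) :=
  (hf.comp (hΦ.cont.measurable.comp measurable_swap)).stronglyMeasurable

lemma IsFlow.stronglyMeasurable_timeAverage (hΦ : IsFlow Φ) (hf : Measurable f) (T : ℝ) :
    StronglyMeasurable (timeAverage Φ f T) :=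
  (hΦ.stronglyMeasurable_uncurry_comp hf).integral_prod_right

lemma IsFlow.integrable_timeAverage (hΦ : IsFlow Φ) (hf : Measurable f) (hC : ∀ z, |f z| ≤ C)
    (T : ℝ) (μ : Measure X) [IsFiniteMeasure μ] : Integrable (timeAverage Φ f T) μ :=
  .of_bound (hΦ.stronglyMeasurable_timeAverage hf T).aestronglyMeasurable C
    (ae_of_all _ (abs_timeAverage_le hC T))

lemma IsFlow.integral_timeAverage (hΦ : IsFlow Φ) {μ : Measure X} [IsFiniteMeasure μ]
    (hμ : FlowInvariant Φ μ) (hf : Measurable f) (hC : ∀ z, |f z| ≤ C) {T : ℝ} (hT : 0 < T) :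
    ∫ x, timeAverage Φ f T x ∂μ = ∫ x, f x ∂μ := by
  have hint : Integrable (Function.uncurry fun (x : X) (s : ℝ) => f (Φ s x))
      (μ.prod (volume.restrict (Ioc 0 T))) :=
    .of_bound (hΦ.stronglyMeasurable_uncurry_comp hf).aestronglyMeasurable C
      (ae_of_all _ fun p => hC (Φ p.2 p.1))
  have hinv (s : ℝ) : ∫ x, f (Φ s x) ∂μ = ∫ x, f x ∂μ := by
    rw [← integral_map (hμ s).aemeasurable hf.aestronglyMeasurable, (hμ s).map_eq]
  simp_rw [timeAverage_eq_div, intervalIntegral.integral_of_le hT.le]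
  rw [integral_div, integral_integral_swap hint]
  simp_rw [hinv]
  rw [setIntegral_const, Real.volume_real_Ioc_of_le hT.le, sub_zero, smul_eq_mul,
    mul_div_cancel_left₀ _ hT.ne']

end FlowAverage

section PointwiseErgodic

lemma limsup_le_limsup_of_tendsto_sub {ι : Type*} {l : Filter ι} [l.NeBot] {u v : ι → ℝ}
    (hu : l.IsBoundedUnder (· ≤ ·) u) (hu' : l.IsBoundedUnder (· ≥ ·) u)
    (h : Tendsto (fun i => v i - u i) l (𝓝 0)) : limsup v l ≤ limsup u l := by
  calc
    limsup v l = limsup (u + fun i => v i - u i) l := by congr 1; ext i; simp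
    _ ≤ limsup u l + limsup (fun i => v i - u i) l :=
      limsup_add_le hu' hu h.isCoboundedUnder_le h.isBoundedUnder_le
    _ = limsup u l := by rw [h.limsup_eq, add_zero]

variable {X : Type*} [TopologicalSpace X] [MeasurableSpace X] [BorelSpace X]
  {Φ : ℝ → X → X} {f : X → ℝ} {C : ℝ}

lemma IsFlow.limsup_timeAverage_comp (hΦ : IsFlow Φ) (hf : Measurable f)
    (hC : ∀ z, |f z| ≤ C) (a : ℝ) (x : X) :
    limsup (fun n : ℕ => timeAverage Φ f n (Φ a x)) atTop =
      limsup (fun n : ℕ => timeAverage Φ f n x) atTop := by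
  have hle (b : ℝ) (z : X) : limsup (fun n : ℕ => timeAverage Φ f n (Φ b z)) atTop ≤
      limsup (fun n : ℕ => timeAverage Φ f n z) atTop :=
    limsup_le_limsup_of_tendsto_sub
      (isBoundedUnder_of ⟨C, fun n => (abs_le.1 (abs_timeAverage_le hC n z)).2⟩)
      (isBoundedUnder_of ⟨-C, fun n => (abs_le.1 (abs_timeAverage_le hC n z)).1⟩)
      ((hΦ.tendsto_timeAverage_comp_sub hf hC b z).comp tendsto_natCast_atTop_atTop)
  refine (hle a x).antisymm ?_
  simpa only [← hΦ.map_add, add_neg_cancel, hΦ.map_zero] using hle (-a) (Φ a x)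

variable [SecondCountableTopology X] {μ : Measure X} [IsProbabilityMeasure μ]

theorem FlowErgodic.ae_eventually_timeAverage_lt (hμ : FlowErgodic Φ μ) (hΦ : IsFlow Φ)
    (hf : Measurable f) (hC : ∀ z, |f z| ≤ C) {c : ℝ} (hc : ∫ x, f x ∂μ < c) :
    ∀ᵐ x ∂μ, ∀ᶠ n : ℕ in atTop, timeAverage Φ f n x < c := by
  obtain ⟨b, hb, hbc⟩ := exists_between hc
  set D : Set X := {x | b < limsup (fun n : ℕ => timeAverage Φ f n x) atTop}
  have hD : MeasurableSet D := measurableSet_lt measurable_const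
    (.limsup fun n => (hΦ.stronglyMeasurable_timeAverage hf n).measurable)
  have hDinv (a : ℝ) : Φ a ⁻¹' D = D := by
    ext x
    simp only [D, mem_preimage, mem_ofPred_eq, hΦ.limsup_timeAverage_comp hf hC]
  have hbdd (x : X) : IsBoundedUnder (· ≤ ·) atTop fun n : ℕ => timeAverage Φ f n x :=
    isBoundedUnder_of ⟨C, fun n => (abs_le.1 (abs_timeAverage_le hC n x)).2⟩
  have hbdd' (x : X) : IsBoundedUnder (· ≥ ·) atTop fun n : ℕ => timeAverage Φ f n x :=
    isBoundedUnder_of ⟨-C, fun n => (abs_le.1 (abs_timeAverage_le hC n x)).1⟩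
  have hD0 : μ D = 0 := by
    refine (hμ.2 D hD hDinv).resolve_right fun hD1 => hb.not_ge ?_
    rw [← hΦ.integral_timeAverage hμ.1 hf hC one_pos]
    refine le_integral_of_ae_frequently_lt_birkhoffAverage (hμ.1 1)
      (hΦ.integrable_timeAverage hf hC 1 μ) ?_
    filter_upwards [(mem_ae_iff_prob_eq_one hD).2 hD1] with x hx
    simpa only [← hΦ.timeAverage_natCast hf hC] using
      frequently_lt_of_lt_limsup (hbdd' x).isCoboundedUnder_le hx
  filter_upwards [measure_eq_zero_iff_ae_notMem.1 hD0] with x hx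
  exact eventually_lt_of_limsup_lt ((not_lt.1 hx).trans_lt hbc) (hbdd x)

theorem FlowErgodic.ae_tendsto_timeAverage_natCast (hμ : FlowErgodic Φ μ) (hΦ : IsFlow Φ)
    (hf : Measurable f) (hC : ∀ z, |f z| ≤ C) :
    ∀ᵐ x ∂μ, Tendsto (fun n : ℕ => timeAverage Φ f n x) atTop (𝓝 (∫ x, f x ∂μ)) := by
  have hupper {g : X → ℝ} (hg : Measurable g) (hgC : ∀ z, |g z| ≤ C) :
      ∀ᵐ x ∂μ, ∀ q : ℚ, ∫ z, g z ∂μ < q → ∀ᶠ n : ℕ in atTop, timeAverage Φ g n x < q :=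
    ae_all_iff.2 fun q => eventually_imp_distrib_left.2 fun hq =>
      hμ.ae_eventually_timeAverage_lt hΦ hg hgC hq
  filter_upwards [hupper hf hC, hupper hf.neg fun z => by simpa using hC z] with x hx hx'
  refine tendsto_order.2 ⟨fun a ha => ?_, fun a ha => ?_⟩
  · obtain ⟨q, haq, hq⟩ := exists_rat_btwn ha
    filter_upwards [hx' (-q) (by simpa [integral_neg] using hq)] with n hn
    rw [timeAverage_neg, Rat.cast_neg, neg_lt_neg_iff] at hn
    exact haq.trans hn
  · obtain ⟨q, hq, hqa⟩ := exists_rat_btwn ha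
    filter_upwards [hx q hq] with n hn using hn.trans hqa

theorem FlowErgodic.ae_tendsto_timeAverage (hμ : FlowErgodic Φ μ) (hΦ : IsFlow Φ)
    (hf : Measurable f) (hC : ∀ z, |f z| ≤ C) :
    ∀ᵐ x ∂μ, Tendsto (fun t => timeAverage Φ f t x) atTop (𝓝 (∫ x, f x ∂μ)) := by
  filter_upwards [hμ.ae_tendsto_timeAverage_natCast hΦ hf hC] with x hx
  have h := hΦ.tendstoUniformlyOn_timeAverage_of_natCast hf hC (g := fun _ => ∫ x, f x ∂μ)
    (tendstoUniformlyOn_singleton_iff_tendsto.2 hx)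
  exact tendstoUniformlyOn_singleton_iff_tendsto.1 h

theorem FlowErgodic.exists_tendstoUniformlyOn_timeAverage (hμ : FlowErgodic Φ μ)
    (hΦ : IsFlow Φ) (hf : Measurable f) (hC : ∀ z, |f z| ≤ C) {δ : ℝ} (hδ : 0 < δ) :
    ∃ S, MeasurableSet S ∧ μ S ≤ ENNReal.ofReal δ ∧
      TendstoUniformlyOn (timeAverage Φ f) (fun _ => ∫ x, f x ∂μ) atTop Sᶜ := by
  obtain ⟨S, hS, hSδ, hunif⟩ := tendstoUniformlyOn_of_ae_tendsto'
    (fun n : ℕ => hΦ.stronglyMeasurable_timeAverage hf n) stronglyMeasurable_const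
    (hμ.ae_tendsto_timeAverage_natCast hΦ hf hC) hδ
  exact ⟨S, hS, hSδ, hΦ.tendstoUniformlyOn_timeAverage_of_natCast hf hC hunif⟩

end PointwiseErgodic

section GenericPoints

lemma lipschitzWith_integral_continuousMap {X : Type*} [TopologicalSpace X] [CompactSpace X]
    [MeasurableSpace X] [OpensMeasurableSpace X] (ν : Measure X) [IsZeroOrProbabilityMeasure ν] :
    LipschitzWith 1 fun f : C(X, ℝ) => ∫ z, f z ∂ν := by
  have hint (f : C(X, ℝ)) : Integrable f ν :=
    f.continuous.integrable_of_hasCompactSupport (.of_compactSpace f)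
  refine LipschitzWith.mk_one fun f g => ?_
  rw [dist_eq_norm, ← integral_sub (hint f) (hint g)]
  calc
    ‖∫ z, (f z - g z) ∂ν‖ ≤ dist f g * ν.real univ :=
      norm_integral_le_of_norm_le_const
        (ae_of_all _ fun z => (dist_eq_norm (f z) (g z)).symm.trans_le (f.dist_apply_le_dist z))
    _ ≤ dist f g := mul_le_of_le_one_right dist_nonneg measureReal_le_one

variable {X : Type*} [MeasurableSpace X] {Φ : ℝ → X → X}

lemma IsFlow.integral_empMeasure [TopologicalSpace X] [BorelSpace X] (hΦ : IsFlow Φ) {f : X → ℝ}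
    (hf : Measurable f) {t : ℝ} (ht : 0 < t) (x : X) :
    ∫ z, f z ∂(empMeasure Φ x t) = timeAverage Φ f t x := by
  rw [empMeasure, integral_smul_measure,
    integral_map (hΦ.continuous_orbit x).measurable.aemeasurable hf.aestronglyMeasurable,
    timeAverage_eq_div, intervalIntegral.integral_of_le ht.le, integral_Icc_eq_integral_Ioc,
    ENNReal.toReal_ofReal (one_div_nonneg.2 ht.le), smul_eq_mul, one_div_mul_eq_div]

-- For `t ≤ 0` the weight `ENNReal.ofReal (1 / t)` vanishes.
lemma IsFlow.isZeroOrProbabilityMeasure_empMeasure [TopologicalSpace X] [BorelSpace X]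
    (hΦ : IsFlow Φ) (x : X) (t : ℝ) :
    IsZeroOrProbabilityMeasure (empMeasure Φ x t) := by
  refine isZeroOrProbabilityMeasure_iff.2 ?_
  rw [empMeasure, Measure.smul_apply, Measure.map_apply (hΦ.continuous_orbit x).measurable
    MeasurableSet.univ, preimage_univ, Measure.restrict_apply_univ, Real.volume_Icc, sub_zero,
    smul_eq_mul]
  rcases le_or_gt t 0 with ht | ht
  · left
    rw [ENNReal.ofReal_of_nonpos ht, mul_zero]
  · right
    rw [← ENNReal.ofReal_mul (one_div_nonneg.2 ht.le), one_div_mul_cancel ht.ne',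
      ENNReal.ofReal_one]

theorem FlowErgodic.ae_generic [MetricSpace X] [CompactSpace X] [BorelSpace X] {μ : Measure X}
    [IsProbabilityMeasure μ] (hμ : FlowErgodic Φ μ) (hΦ : IsFlow Φ) : ∀ᵐ x ∂μ, Generic Φ μ x := by
  have hdense : ∀ᵐ x ∂μ, ∀ k : ℕ,
      Tendsto (fun t => timeAverage Φ (TopologicalSpace.denseSeq C(X, ℝ) k) t x) atTop
        (𝓝 (∫ z, TopologicalSpace.denseSeq C(X, ℝ) k z ∂μ)) :=
    ae_all_iff.2 fun k => hμ.ae_tendsto_timeAverage hΦ (map_continuous _).measurable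
      (ContinuousMap.norm_coe_le_norm (TopologicalSpace.denseSeq C(X, ℝ) k))
  filter_upwards [hdense] with x hx f
  have hequi : Equicontinuous fun (t : ℝ) (g : C(X, ℝ)) => ∫ z, g z ∂(empMeasure Φ x t) :=
    (LipschitzWith.uniformEquicontinuous _ 1 fun t =>
      have := hΦ.isZeroOrProbabilityMeasure_empMeasure x t
      lipschitzWith_integral_continuousMap (empMeasure Φ x t)).equicontinuous
  have hclosed : IsClosed {g : C(X, ℝ) |
      Tendsto (fun t => ∫ z, g z ∂(empMeasure Φ x t)) atTop (𝓝 (∫ z, g z ∂μ))} :=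
    hequi.isClosed_setOfPred_tendsto (lipschitzWith_integral_continuousMap μ).continuous
  refine (TopologicalSpace.denseRange_denseSeq C(X, ℝ)).induction_on f hclosed fun k => ?_
  refine (hx k).congr' ?_
  filter_upwards [eventually_gt_atTop 0] with t ht
  exact (hΦ.integral_empMeasure (map_continuous _).measurable ht x).symm

end GenericPoints

section Mismatch

variable {X : Type*} {P Q : ℕ → Set X}

/-- The set `{z | P(z) ≠ Q(z)}` on which two ordered partitions, given by their sequences of cells,
disagree; its measure is what `dPart` minimizes over reorderings of `Q`. -/
def mismatch (P Q : ℕ → Set X) : Set X := ⋃ j, P j \ Q j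

lemma measurableSet_mismatch [MeasurableSpace X] (hP : ∀ j, MeasurableSet (P j))
    (hQ : ∀ j, MeasurableSet (Q j)) : MeasurableSet (mismatch P Q) :=
  .iUnion fun j => (hP j).diff (hQ j)

lemma mem_iff_mem_of_notMem_mismatch (hP : ⋃ j, P j = univ)
    (hQ : Pairwise (Function.onFun Disjoint Q)) {z : X} (hz : z ∉ mismatch P Q) (j : ℕ) :
    z ∈ P j ↔ z ∈ Q j := by
  have hsub (i : ℕ) (hi : z ∈ P i) : z ∈ Q i := by
    by_contra hcon
    exact hz (mem_iUnion.2 ⟨i, hi, hcon⟩)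
  refine ⟨hsub j, fun hj => ?_⟩
  obtain ⟨i, hi⟩ := mem_iUnion.1 (hP.symm.subset (mem_univ z))
  obtain rfl : i = j := hQ.eq (not_disjoint_iff.2 ⟨z, hsub i hi, hj⟩)
  exact hi

end Mismatch

section TimeChange

lemma measurableSet_inter_preimage_of_monotoneOn {α β : Type*} [LinearOrder α]
    [TopologicalSpace α] [OrderClosedTopology α] [MeasurableSpace α] [BorelSpace α]
    [LinearOrder β] [TopologicalSpace β] [OrderTopology β] [SecondCountableTopology β]
    [MeasurableSpace β] [BorelSpace β] {f : α → β} {s : Set α} {t : Set β}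
    (hf : MonotoneOn f s) (hs : MeasurableSet s) (ht : MeasurableSet t) :
    MeasurableSet (s ∩ f ⁻¹' t) := by
  have hmeas : Measurable (s.domRestrict f) := hf.monotone.measurable
  rw [← Subtype.image_preimage_coe]
  exact hs.subtype_image (hmeas ht)

lemma ofReal_sub_lt_measure_sdiff {α : Type*} [MeasurableSpace α] {μ : Measure α} {s n : Set α}
    {a b : ℝ} (hn : MeasurableSet n) (hns : n ⊆ s) (hs : μ s ≠ ∞) (hba : b ≤ a)
    (ha : ENNReal.ofReal a < μ s) (hb : μ.real n ≤ b) : ENNReal.ofReal (a - b) < μ (s \ n) := by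
  have ha0 : 0 ≤ a := (measureReal_nonneg.trans hb).trans hba
  have has : a < μ.real s := (ENNReal.ofReal_lt_iff_lt_toReal ha0 hs).1 ha
  rw [ENNReal.ofReal_lt_iff_lt_toReal (sub_nonneg.2 hba) (measure_ne_top_of_subset sdiff_subset hs),
    ← measureReal_def, measureReal_sdiff hns hn hs]
  linarith

/-- The part of a `(t,ε,P)`-matching that does not involve the partition: an increasing absolutely
continuous `h` on `A ⊆ [0,t]` with derivative `h'` within `ε` of `1`, such that `A` and
`h '' A ⊆ [0,t]` have measure more than `(1-ε)t`. The target set `A'` of a matching is `h '' A`. -/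
structure IsTimeChange (t ε : ℝ) (A : Set ℝ) (h h' : ℝ → ℝ) : Prop where
  measurableSet : MeasurableSet A
  subset_Icc : A ⊆ Icc 0 t
  image_subset_Icc : h '' A ⊆ Icc 0 t
  lt_volume : ENNReal.ofReal ((1 - ε) * t) < volume A
  lt_volume_image : ENNReal.ofReal ((1 - ε) * t) < volume (h '' A)
  strictMonoOn : StrictMonoOn h A
  volume_image : ∀ B ⊆ A, MeasurableSet B → volume (h '' B) = ENNReal.ofReal (∫ s in B, h' s)
  abs_sub_one_lt : ∀ s ∈ A, |h' s - 1| < ε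

namespace IsTimeChange

variable {t ε : ℝ} {A : Set ℝ} {h h' : ℝ → ℝ}

lemma pos (H : IsTimeChange t ε A h h') : 0 < ε := by
  obtain ⟨s, hs⟩ := nonempty_of_measure_ne_zero H.lt_volume.ne_bot
  exact (abs_nonneg _).trans_lt (H.abs_sub_one_lt s hs)

lemma volume_ne_top (H : IsTimeChange t ε A h h') : volume A ≠ ∞ :=
  measure_ne_top_of_subset H.subset_Icc measure_Icc_lt_top.ne

lemma volume_image_ne_top (H : IsTimeChange t ε A h h') : volume (h '' A) ≠ ∞ :=
  measure_ne_top_of_subset H.image_subset_Icc measure_Icc_lt_top.ne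

-- Otherwise the Bochner integral `∫ s in A, h' s` would be `0`, making `h '' A` a null set.
lemma integrableOn (H : IsTimeChange t ε A h h') : IntegrableOn h' A := by
  by_contra hcon
  have hnull : volume (h '' A) = 0 := by
    rw [H.volume_image A Subset.rfl H.measurableSet, integral_undef hcon, ENNReal.ofReal_zero]
  exact H.lt_volume_image.ne_bot hnull

lemma abs_volume_real_image_sub_le (H : IsTimeChange t ε A h h') {B : Set ℝ} (hBA : B ⊆ A)
    (hB : MeasurableSet B) :
    |volume.real (h '' B) - volume.real B| ≤ ε * volume.real B := by
  have hint : IntegrableOn h' B := H.integrableOn.mono_set hBA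
  have hconst (c : ℝ) : IntegrableOn (fun _ => c) B :=
    integrableOn_const (measure_ne_top_of_subset hBA H.volume_ne_top)
  have hlower := setIntegral_mono_on (hconst (1 - ε)) hint hB
    fun s hs => by linarith [(abs_lt.1 (H.abs_sub_one_lt s (hBA hs))).1]
  have hupper := setIntegral_mono_on hint (hconst (1 + ε)) hB
    fun s hs => by linarith [(abs_lt.1 (H.abs_sub_one_lt s (hBA hs))).2]
  rw [setIntegral_const, smul_eq_mul] at hlower hupper
  have hvol : 0 ≤ volume.real B * (1 + ε) :=
    mul_nonneg measureReal_nonneg (by linarith [H.pos])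
  rw [measureReal_def (s := h '' B), H.volume_image B hBA hB, ENNReal.toReal_ofReal', abs_le]
  constructor
  · linarith [le_max_left (∫ s in B, h' s) 0]
  · linarith [max_le hupper hvol]

theorem sdiff (H : IsTimeChange t ε A h h') (ht : 0 < t) {η : ℝ} (hη : ε + η ≤ 1) {N : Set ℝ}
    (hN : MeasurableSet N) (hNA : N ⊆ A) (hvol : volume.real N ≤ η * t)
    (hvol_image : volume.real (h '' N) ≤ η * t) : IsTimeChange t (ε + η) (A \ N) h h' := by
  have hη0 : 0 ≤ η := nonneg_of_mul_nonneg_left (measureReal_nonneg.trans hvol) ht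
  have hle : η * t ≤ (1 - ε) * t := mul_le_mul_of_nonneg_right (by linarith) ht.le
  have hsplit : (1 - (ε + η)) * t = (1 - ε) * t - η * t := by ring
  have himage : h '' (A \ N) = h '' A \ h '' N := H.strictMonoOn.injOn.image_sdiff_subset hNA
  exact
    { measurableSet := H.measurableSet.diff hN
      subset_Icc := sdiff_subset.trans H.subset_Icc
      image_subset_Icc := (image_mono sdiff_subset).trans H.image_subset_Icc
      lt_volume := hsplit ▸ ofReal_sub_lt_measure_sdiff hN hNA H.volume_ne_top hle H.lt_volume hvol
      lt_volume_image := by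
        rw [hsplit, himage]
        exact ofReal_sub_lt_measure_sdiff
          (hN.image_of_monotoneOn (H.strictMonoOn.mono hNA).monotoneOn) (image_mono hNA)
          H.volume_image_ne_top hle H.lt_volume_image hvol_image
      strictMonoOn := H.strictMonoOn.mono sdiff_subset
      volume_image := fun B hB => H.volume_image B (hB.trans sdiff_subset)
      abs_sub_one_lt := fun s hs => (H.abs_sub_one_lt s hs.1).trans_le (by linarith) }

theorem sdiff_union_preimage (H : IsTimeChange t ε A h h') (ht : 0 < t) {κ : ℝ}
    (hκ : 3 / 2 * ε + 2 * κ ≤ 1) {U V : Set ℝ} (hU : MeasurableSet U) (hV : MeasurableSet V)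
    (hUκ : volume.real (Icc 0 t ∩ U) ≤ κ * t) (hVκ : volume.real (Icc 0 t ∩ V) ≤ κ * t) :
    IsTimeChange t (3 / 2 * ε + 2 * κ) (A \ (U ∪ h ⁻¹' V)) h h' := by
  have hε := H.pos
  have hκ0 : 0 ≤ κ := nonneg_of_mul_nonneg_left (measureReal_nonneg.trans hUκ) ht
  have hκε : κ * t ≤ (1 - ε) * (t / 2) := by
    linarith [mul_le_mul_of_nonneg_right (show κ ≤ (1 - ε) / 2 by linarith) ht.le]
  have hAU : MeasurableSet (A ∩ U) := H.measurableSet.inter hU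
  have hAV : MeasurableSet (A ∩ h ⁻¹' V) :=
    measurableSet_inter_preimage_of_monotoneOn H.strictMonoOn.monotoneOn H.measurableSet hV
  have hvolU : volume.real (A ∩ U) ≤ κ * t :=
    (measureReal_mono (inter_subset_inter_left U H.subset_Icc)
      (measure_ne_top_of_subset inter_subset_left measure_Icc_lt_top.ne)).trans hUκ
  have hvolV_image : volume.real (h '' (A ∩ h ⁻¹' V)) ≤ κ * t := by
    rw [image_inter_preimage]
    exact (measureReal_mono (inter_subset_inter_left V H.image_subset_Icc)
      (measure_ne_top_of_subset inter_subset_left measure_Icc_lt_top.ne)).trans hVκ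
  have hdistU := abs_le.1 (H.abs_volume_real_image_sub_le inter_subset_left hAU)
  have hdistV := abs_le.1 (H.abs_volume_real_image_sub_le inter_subset_left hAV)
  -- Both pieces have volume at most `t / 2`, so `h` distorts their volumes by at most `ε t / 2`.
  have hvolU_half : volume.real (A ∩ U) ≤ t / 2 := by linarith [mul_pos hε ht]
  have hshrink : (1 - ε) * volume.real (A ∩ h ⁻¹' V) ≤ κ * t := by linarith
  have hvolV_half : volume.real (A ∩ h ⁻¹' V) ≤ t / 2 :=
    le_of_mul_le_mul_left (hshrink.trans hκε) (by linarith)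
  have hεU := mul_le_mul_of_nonneg_left hvolU_half hε.le
  have hεV := mul_le_mul_of_nonneg_left hvolV_half hε.le
  have hη : 3 / 2 * ε + 2 * κ = ε + (ε / 2 + 2 * κ) := by ring
  rw [hη, ← sdiff_self_inter, inter_union_distrib_left]
  refine H.sdiff ht (hη ▸ hκ) (hAU.union hAV) (union_subset inter_subset_left inter_subset_left)
    ?_ ?_
  · linarith [measureReal_union_le (μ := volume) (A ∩ U) (A ∩ h ⁻¹' V)]
  · rw [image_union]
    linarith [measureReal_union_le (μ := volume) (h '' (A ∩ U)) (h '' (A ∩ h ⁻¹' V))]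

end IsTimeChange

end TimeChange

section Matching

variable {X : Type*} {Φ : ℝ → X → X} {P Q : ℕ → Set X} {t ε κ : ℝ} {x y : X}

lemma pMatchable_iff_exists_isTimeChange : PMatchable Φ P x y t ε ↔
    ∃ A h h', IsTimeChange t ε A h h' ∧ ∀ s ∈ A, ∀ j, Φ s x ∈ P j ↔ Φ (h s) y ∈ P j := by
  constructor
  · rintro ⟨A, A', h, h', hA, -, hsub, hsub', hvol, hvol', hmaps, hsurj, hmono, himage, hder, hP⟩
    obtain rfl : h '' A = A' := hmaps.image_subset.antisymm hsurj
    exact ⟨A, h, h', ⟨hA, hsub, hsub', hvol, hvol', hmono, himage, hder⟩, hP⟩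
  · rintro ⟨A, h, h', H, hP⟩
    exact ⟨A, h '' A, h, h', H.measurableSet,
      H.measurableSet.image_of_monotoneOn H.strictMonoOn.monotoneOn, H.subset_Icc,
      H.image_subset_Icc, H.lt_volume, H.lt_volume_image, mapsTo_image h A, surjOn_image h A,
      H.strictMonoOn, H.volume_image, H.abs_sub_one_lt, hP⟩

lemma pMatchable_comp_of_surjective {σ : ℕ → ℕ} (hσ : Function.Surjective σ) :
    PMatchable Φ (Q ∘ σ) x y t ε ↔ PMatchable Φ Q x y t ε := by
  have hcells (s r : ℝ) : (∀ j, Φ s x ∈ Q (σ j) ↔ Φ r y ∈ Q (σ j)) ↔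
      ∀ j, Φ s x ∈ Q j ↔ Φ r y ∈ Q j :=
    (hσ.forall (p := fun j => Φ s x ∈ Q j ↔ Φ r y ∈ Q j)).symm
  simp only [PMatchable, Function.comp_apply, hcells]

lemma fPart_comp_of_surjective {σ : ℕ → ℕ} (hσ : Function.Surjective σ) :
    fPart Φ (Q ∘ σ) t x y = fPart Φ Q t x y := by
  simp only [fPart, pMatchable_comp_of_surjective hσ]

lemma zero_mem_lowerBounds_pMatchable :
    (0 : ℝ) ∈ lowerBounds ({ε | 0 < ε ∧ PMatchable Φ P x y t ε} ∪ {1}) := by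
  rintro ε (hε | rfl)
  exacts [hε.1.le, zero_le_one]

lemma fPart_nonneg (Φ : ℝ → X → X) (P : ℕ → Set X) (t : ℝ) (x y : X) : 0 ≤ fPart Φ P t x y :=
  le_csInf ⟨1, Or.inr rfl⟩ zero_mem_lowerBounds_pMatchable

lemma fPart_le_one (Φ : ℝ → X → X) (P : ℕ → Set X) (t : ℝ) (x y : X) : fPart Φ P t x y ≤ 1 :=
  csInf_le ⟨0, zero_mem_lowerBounds_pMatchable⟩ (Or.inr rfl)

lemma PMatchable.fPart_le (hmatch : PMatchable Φ P x y t ε) : fPart Φ P t x y ≤ ε := by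
  obtain ⟨A, h, h', H, -⟩ := pMatchable_iff_exists_isTimeChange.1 hmatch
  exact csInf_le ⟨0, zero_mem_lowerBounds_pMatchable⟩ (Or.inl ⟨H.pos, hmatch⟩)

/-- The amount of time in `[0, t]` that the `Φ`-orbit of `x` spends in `E`. -/
noncomputable def occupationTime (Φ : ℝ → X → X) (E : Set X) (t : ℝ) (x : X) : ℝ :=
  volume.real {s ∈ Icc 0 t | Φ s x ∈ E}

variable [TopologicalSpace X] [MeasurableSpace X] [BorelSpace X]

theorem PMatchable.of_occupationTime_le (hmatch : PMatchable Φ Q x y t ε) (hΦ : IsFlow Φ)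
    (hPQ : MeasurableSet (mismatch P Q)) (hPcover : ⋃ j, P j = univ)
    (hQdisj : Pairwise (Function.onFun Disjoint Q)) (ht : 0 < t) (hκ : 3 / 2 * ε + 2 * κ ≤ 1)
    (hx : occupationTime Φ (mismatch P Q) t x ≤ κ * t)
    (hy : occupationTime Φ (mismatch P Q) t y ≤ κ * t) :
    PMatchable Φ P x y t (3 / 2 * ε + 2 * κ) := by
  obtain ⟨A, h, h', H, hAQ⟩ := pMatchable_iff_exists_isTimeChange.1 hmatch
  have hvisits (z : X) : MeasurableSet {s | Φ s z ∈ mismatch P Q} :=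
    (hΦ.continuous_orbit z).measurable hPQ
  refine pMatchable_iff_exists_isTimeChange.2
    ⟨_, h, h', H.sdiff_union_preimage ht hκ (hvisits x) (hvisits y) hx hy, fun s hs j => ?_⟩
  have hcells {z : X} (hz : z ∉ mismatch P Q) : z ∈ P j ↔ z ∈ Q j :=
    mem_iff_mem_of_notMem_mismatch hPcover hQdisj hz j
  rw [hcells fun hxs => hs.2 (Or.inl hxs), hcells fun hys => hs.2 (Or.inr hys)]
  exact hAQ s hs.1 j

theorem fPart_le_of_occupationTime_le (hΦ : IsFlow Φ)
    (hPQ : MeasurableSet (mismatch P Q)) (hPcover : ⋃ j, P j = univ)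
    (hQdisj : Pairwise (Function.onFun Disjoint Q)) (ht : 0 < t)
    (hx : occupationTime Φ (mismatch P Q) t x ≤ κ * t)
    (hy : occupationTime Φ (mismatch P Q) t y ≤ κ * t) :
    fPart Φ P t x y ≤ 3 / 2 * fPart Φ Q t x y + 2 * κ := by
  have hκ0 : 0 ≤ κ := nonneg_of_mul_nonneg_left (measureReal_nonneg.trans hx) ht
  have hle_one : fPart Φ P t x y ≤ 1 := fPart_le_one Φ P t x y
  suffices 2 / 3 * (fPart Φ P t x y - 2 * κ) ≤ fPart Φ Q t x y by linarith
  refine le_csInf ⟨1, Or.inr rfl⟩ ?_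
  rintro ε (⟨-, hmatch⟩ | rfl)
  · rcases le_total (3 / 2 * ε + 2 * κ) 1 with hsmall | hlarge
    · have hle :=
        (hmatch.of_occupationTime_le hΦ hPQ hPcover hQdisj ht hsmall hx hy).fPart_le
      linarith
    · linarith
  · linarith

end Matching

section OccupationTime

variable {X : Type*} [TopologicalSpace X] [MeasurableSpace X] [BorelSpace X] {Φ : ℝ → X → X}
  {E : Set X}

lemma IsFlow.occupationTime_eq_mul_timeAverage (hΦ : IsFlow Φ) (hE : MeasurableSet E) {t : ℝ}
    (ht : 0 ≤ t) (x : X) : occupationTime Φ E t x = t * timeAverage Φ (E.indicator 1) t x := by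
  have hvisits : MeasurableSet {s | Φ s x ∈ E} := (hΦ.continuous_orbit x).measurable hE
  calc
    occupationTime Φ E t x = ∫ s in Icc 0 t, {s | Φ s x ∈ E}.indicator (1 : ℝ → ℝ) s := by
      rw [integral_indicator_one hvisits, measureReal_restrict_apply hvisits, inter_comm]
      rfl
    _ = ∫ s in (0 : ℝ)..t, E.indicator 1 (Φ s x) := by
      rw [intervalIntegral.integral_of_le ht, integral_Icc_eq_integral_Ioc]
      rfl
    _ = t * timeAverage Φ (E.indicator 1) t x := (mul_timeAverage t x).symm

variable [SecondCountableTopology X] {μ : Measure X} [IsProbabilityMeasure μ]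

theorem FlowErgodic.exists_measurableSet_occupationTime_le (hμ : FlowErgodic Φ μ) (hΦ : IsFlow Φ)
    (hE : MeasurableSet E) {κ : ℝ} (hκ : μ.real E < κ) {G : Set X} (hG : G ∈ ae μ) {δ : ℝ}
    (hδ : 0 < δ) :
    ∃ (H : Set X) (t₀ : ℝ), MeasurableSet H ∧ H ⊆ G ∧ ENNReal.ofReal (1 - δ) < μ H ∧ 1 < t₀ ∧
      ∀ x ∈ H, ∀ t, t₀ ≤ t → occupationTime Φ E t x ≤ κ * t := by
  obtain ⟨η, hη, hηδ⟩ := exists_between (lt_min hδ one_pos)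
  have hind (z : X) : |E.indicator (1 : X → ℝ) z| ≤ 1 := by
    by_cases hz : z ∈ E <;> simp [hz]
  obtain ⟨S, hS, hSη, hunif⟩ := hμ.exists_tendstoUniformlyOn_timeAverage hΦ
    (measurable_one.indicator hE) hind hη
  rw [integral_indicator_one hE] at hunif
  obtain ⟨t₁, ht₁⟩ := eventually_atTop.1 (hunif.eventually_forall_lt hκ fun _ _ => le_rfl)
  obtain ⟨G', hG', hG'm, hG'G⟩ := IsMeasurablyGenerated.exists_measurable_subset hG
  refine ⟨G' ∩ Sᶜ, max t₁ 2, hG'm.inter hS.compl, fun x hx => hG'G hx.1, ?_,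
    one_lt_two.trans_le (le_max_right _ _), fun x hx t ht => ?_⟩
  · calc
      ENNReal.ofReal (1 - δ) < ENNReal.ofReal (1 - η) :=
        (ENNReal.ofReal_lt_ofReal_iff (sub_pos.2 (hηδ.trans_le (min_le_right _ _)))).2
          (sub_lt_sub_left (hηδ.trans_le (min_le_left _ _)) 1)
      _ = 1 - ENNReal.ofReal η := by rw [ENNReal.ofReal_sub 1 hη.le, ENNReal.ofReal_one]
      _ ≤ 1 - μ S := tsub_le_tsub_left hSη 1
      _ = μ (G' ∩ Sᶜ) := by
        rw [Measure.measure_inter_eq_of_ae hG', prob_compl_eq_one_sub hS]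
  · have ht0 : 0 ≤ t := zero_le_two.trans ((le_max_right _ _).trans ht)
    rw [hΦ.occupationTime_eq_mul_timeAverage hE ht0, mul_comm]
    exact mul_le_mul_of_nonneg_right (ht₁ t ((le_max_left _ _).trans ht) x hx.2).le ht0

end OccupationTime

theorem stmt8_general {X : Type*} [TopologicalSpace X] [SecondCountableTopology X]
    [MeasurableSpace X] [BorelSpace X] {Φ : ℝ → X → X} (hΦ : IsFlow Φ) {μ : Measure X}
    [IsProbabilityMeasure μ] (hμ : FlowErgodic Φ μ) {P Q : ℕ → Set X}
    (hP : ∀ j, MeasurableSet (P j)) (hQ : ∀ j, MeasurableSet (Q j)) (hPcover : ⋃ j, P j = univ)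
    (hQdisj : Pairwise (Function.onFun Disjoint Q)) {G : Set X} (hG : G ∈ ae μ) {δ : ℝ}
    (hδ : 0 < δ) :
    ∃ (H : Set X) (t₀ : ℝ), MeasurableSet H ∧ H ⊆ G ∧ ENNReal.ofReal (1 - δ) < μ H ∧ 1 < t₀ ∧
      ∀ x ∈ H, ∀ y ∈ H, ∀ t, t₀ ≤ t →
        fPart Φ P t x y ≤ 3 / 2 * fPart Φ Q t x y + 2 * dPart μ P Q + δ := by
  obtain ⟨σ, hσ⟩ : ∃ σ : Equiv.Perm ℕ, μ.real (mismatch P (Q ∘ σ)) < dPart μ P Q + δ / 2 :=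
    exists_lt_of_ciInf_lt (lt_add_of_pos_right _ (half_pos hδ))
  have hPQ : MeasurableSet (mismatch P (Q ∘ σ)) := measurableSet_mismatch hP fun j => hQ (σ j)
  obtain ⟨H, t₀, hH, hHG, hHμ, ht₀, hocc⟩ :=
    hμ.exists_measurableSet_occupationTime_le hΦ hPQ hσ hG hδ
  refine ⟨H, t₀, hH, hHG, hHμ, ht₀, fun x hx y hy t ht => ?_⟩
  have hle := fPart_le_of_occupationTime_le hΦ hPQ hPcover
    (hQdisj.comp_of_injective σ.injective) (by linarith) (hocc x hx t ht) (hocc y hy t ht)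
  rw [fPart_comp_of_surjective σ.surjective] at hle
  linarith

theorem stmt8 {X : Type*} [MetricSpace X] [CompactSpace X] [MeasurableSpace X] [BorelSpace X] (Φ : ℝ → X → X) (hΦ : IsFlow Φ)
    (μ : Measure X) [IsProbabilityMeasure μ] (hμ : FlowErgodic Φ μ)
    (P Q : BPartition X) (δ : ℝ) (hδ : 0 < δ) :
    ∃ (H : Set X) (t₀ : ℝ), MeasurableSet H ∧ H ⊆ {z | Generic Φ μ z} ∧
      ENNReal.ofReal (1 - δ) < μ H ∧ 1 < t₀ ∧
      ∀ x ∈ H, ∀ y ∈ H, ∀ t : ℝ, t₀ ≤ t →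
        fPart Φ P.cells t x y ≤
          4 * fPart Φ Q.cells t x y + 2 * dPart μ P.cells Q.cells + δ := by
  obtain ⟨H, t₀, hH, hgen, hHμ, ht₀, hle⟩ := stmt8_general hΦ hμ P.measurable Q.measurable
    P.cover Q.disj (hμ.ae_generic hΦ) hδ
  exact ⟨H, t₀, hH, hgen, hHμ, ht₀, fun x hx y hy t ht => by
    linarith [hle x hx y hy t ht, fPart_nonneg Φ Q.cells t x y]⟩
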